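/- arXiv:1904.04519 — 2 statements merged into one kernel-verified Lean document; each statement's English description precedes it below -/
import Mathlib

section
/- If G is a chordal graph, then the independence domination number iγ(G) equals the domination number γ(G). -/
variable {V : Type*} [Fintype V] [DecidableEq V]

open Finset


/-- `W` dominates the set `A` in `G`: every vertex of `A` is in `W` or adjacent to a vertex of `W`. -/
def Dominates (G : SimpleGraph V) (W A : Finset V) : Prop :=
  ∀ a ∈ A, a ∈ W ∨ ∃ w ∈ W, G.Adj w a

/-- `I` is an independent set of `G`. -/
def IndepSet (G : SimpleGraph V) (I : Finset V) : Prop :=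
  ∀ u ∈ I, ∀ v ∈ I, ¬ G.Adj u v

instance (G : SimpleGraph V) [DecidableRel G.Adj] (I : Finset V) :
    Decidable (IndepSet G I) := by unfold IndepSet; infer_instance

/-- The domination number of `G`. -/
noncomputable def gamma (G : SimpleGraph V) : ℕ :=
  sInf {k | ∃ W : Finset V, W.card = k ∧ Dominates G W Finset.univ}

/-- The independence domination number of `G`. -/
noncomputable def igamma (G : SimpleGraph V) : ℕ :=
  sInf {k | ∀ I : Finset V, IndepSet G I → ∃ W : Finset V, W.card ≤ k ∧ Dominates G W I}

/-- The noncover complex of `G`: faces are the vertex sets whose complement is not independent. -/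
def NC (G : SimpleGraph V) [DecidableRel G.Adj] : Finset (Finset V) :=
  Finset.univ.filter fun W => ¬ IndepSet G Wᶜ

/-- The independence complex of `G`. -/
def IndComplex (G : SimpleGraph V) [DecidableRel G.Adj] : Finset (Finset V) :=
  Finset.univ.filter fun I => IndepSet G I

/-- The combinatorial Alexander dual of a complex on the full vertex set `V`. -/
def AlexDual (K : Finset (Finset V)) : Finset (Finset V) :=
  Finset.univ.filter fun s => sᶜ ∉ K

/-- `K` is a simplicial complex (downward closed family of finite sets). -/
def IsComplex (K : Finset (Finset V)) : Prop :=
  ∀ σ ∈ K, ∀ τ ⊆ σ, τ ∈ K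

/-- `s` is a maximal face (facet) of `K`. -/
def IsMaxFace (K : Finset (Finset V)) (s : Finset V) : Prop :=
  s ∈ K ∧ ∀ t ∈ K, s ⊆ t → t = s

/-- `σ` is a free face of `K`: a face contained in a unique maximal face. -/
def IsFreeFace (K : Finset (Finset V)) (σ : Finset V) : Prop :=
  σ ∈ K ∧ ∃ τ ∈ K, σ ⊆ τ ∧ ∀ ρ ∈ K, σ ⊆ ρ → ρ ⊆ τ

/-- `K'` is obtained from `K` by an elementary `d`-collapse. -/
def ElemCollapse (d : ℕ) (K K' : Finset (Finset V)) : Prop :=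
  ∃ σ : Finset V, IsFreeFace K σ ∧ σ.card ≤ d ∧ K' = K.filter fun ρ => ¬ σ ⊆ ρ

/-- `K` is `d`-collapsible. -/
def Collapsible (d : ℕ) (K : Finset (Finset V)) : Prop :=
  Relation.ReflTransGen (ElemCollapse d) K ∅

/-- chordality -/
def IsChordal (G : SimpleGraph V) : Prop :=
  ∀ (u : V) (c : G.Walk u u), c.IsCycle → 4 ≤ c.length →
    ∃ x ∈ c.support, ∃ y ∈ c.support, G.Adj x y ∧ s(x, y) ∉ c.edges

/-- simplicial vertex -/
def IsSimplicialVtx (G : SimpleGraph V) (v : V) : Prop :=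
  ∀ x y : V, G.Adj v x → G.Adj v y → x ≠ y → G.Adj x y


namespace ChordDom

open SimpleGraph

/-- `X` dominates the single vertex `a`. -/
def Dm (G : SimpleGraph V) (X : Finset V) (a : V) : Prop := a ∈ X ∨ ∃ w ∈ X, G.Adj w a

lemma edge_mem {G : SimpleGraph V} {u v : V} (p : G.Walk u v) (i : ℕ) (hi : i < p.length) :
    s(p.getVert i, p.getVert (i+1)) ∈ p.edges := by
  induction p generalizing i with
  | nil => simp at hi
  | cons h p ih =>
    cases i with
    | zero => simp
    | succ i =>
      simp only [Walk.getVert_cons_succ, Walk.edges_cons, List.mem_cons]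
      right
      exact ih i (by simpa using hi)

/-- Key consequence of chordality. -/
lemma common {G : SimpleGraph V} (hG : IsChordal G) (R : Set V) (x k : V) (hxk : G.Adj x k)
    (hx : x ∉ R) (hk : k ∉ R) {a b : V} (w : G.Walk a b) (hw : ∀ z ∈ w.support, z ∈ R)
    (hxa : G.Adj x a) (hbk : G.Adj b k) : ∃ z ∈ R, G.Adj x z ∧ G.Adj z k := by
  classical
  let P : ℕ → Prop := fun n => ∃ (a b : V) (w : G.Walk a b), (∀ z ∈ w.support, z ∈ R) ∧
    G.Adj x a ∧ G.Adj b k ∧ w.length = n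
  have hP : ∃ n, P n := ⟨_, a, b, w, hw, hxa, hbk, rfl⟩
  have hmin : ∀ (a b : V) (w : G.Walk a b), (∀ z ∈ w.support, z ∈ R) →
    G.Adj x a → G.Adj b k → Nat.find hP ≤ w.length := fun a b w h1 h2 h3 =>
      Nat.find_min' hP ⟨a, b, w, h1, h2, h3, rfl⟩
  obtain ⟨a, b, w0, hw0, hxa, hbk, hlen0⟩ := Nat.find_spec hP
  obtain ⟨w, hw, hlen, hpath⟩ : ∃ w : G.Walk a b, (∀ z ∈ w.support, z ∈ R) ∧
      w.length = Nat.find hP ∧ w.IsPath := by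
    have h1 : ∀ z ∈ w0.bypass.support, z ∈ R :=
      fun z hz => hw0 z (w0.support_bypass_subset_support hz)
    refine ⟨w0.bypass, h1, ?_, w0.bypass_isPath⟩
    have := hmin _ _ _ h1 hxa hbk
    have := w0.length_bypass_le_length
    omega
  by_cases h0 : w.length = 0
  · have hab := Walk.eq_of_length_eq_zero h0
    subst hab
    exact ⟨a, hw a (by simp), hxa, hbk⟩
  exfalso
  have hkw : k ∉ w.support := fun h => hk (hw _ h)
  have hxw : x ∉ w.support := fun h => hx (hw _ h)
  have hq : ((w.concat hbk).concat hxk.symm).IsPath := by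
    refine (hpath.concat hkw hbk).concat ?_ _
    simp [Walk.support_concat, hxw, hxk.ne]
  have hc : (Walk.cons hxk.symm (Walk.cons hxa (w.concat hbk))).IsCycle := by
    rw [Walk.cons_isCycle_iff]
    refine ⟨?_, ?_⟩
    · rw [Walk.cons_isPath_iff]
      refine ⟨hpath.concat hkw hbk, ?_⟩
      simp [Walk.support_concat, hxw, hxk.ne]
    · simp only [Walk.edges_cons, Walk.edges_concat, List.mem_cons, List.concat_eq_append,
        List.mem_append, List.not_mem_nil, or_false, not_or]
      have hak : a ≠ k := fun h => hkw (h ▸ w.start_mem_support)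
      have hbx : b ≠ x := fun h => hxw (h ▸ w.end_mem_support)
      have hxk' := hxk.ne
      refine ⟨?_, ?_, ?_⟩
      · simp only [Sym2.eq_iff]; grind
      · intro h; exact hkw (w.fst_mem_support_of_mem_edges h)
      · simp only [Sym2.eq_iff]; grind
  obtain ⟨y, hy, z, hz, hyz, hne⟩ := hG _ _ hc (by simp; omega)
  have key : ∀ y z, y = x → z ∈ w.support → G.Adj y z → z = a := by
    rintro y z rfl hz hyz
    by_contra hza
    have h1 := hmin _ _ (w.dropUntil z hz)
      (fun t ht => hw t (w.support_dropUntil_subset_support hz ht)) hyz hbk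
    have := Walk.length_dropUntil_lt_length hz hza
    omega
  have key2 : ∀ y z, y = k → z ∈ w.support → G.Adj y z → z = b := by
    rintro y z rfl hz hyz
    by_contra hza
    have h1 := hmin _ _ (w.takeUntil z hz)
      (fun t ht => hw t (w.support_takeUntil_subset_support hz ht)) hxa hyz.symm
    have := Walk.length_takeUntil_lt_length hz hza
    omega
  have key3 : ∀ i j, i ≤ j → j ≤ w.length → G.Adj (w.getVert i) (w.getVert j) →
      s(w.getVert i, w.getVert j) ∈ w.edges := by
    intro i j hij hj hadj
    have h1 := hmin _ _ ((w.take i).append (Walk.cons hadj (w.drop j))) (by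
      intro t ht
      rw [Walk.mem_support_append_iff] at ht
      apply hw
      rcases ht with ht | ht
      · rw [Walk.support_take] at ht
        exact List.mem_of_mem_take ht
      · rw [Walk.support_cons, List.mem_cons] at ht
        rcases ht with rfl | ht
        · exact Walk.getVert_mem_support _ _
        · rw [Walk.drop_support_eq_support_drop_min] at ht
          exact List.mem_of_mem_drop ht) hxa hbk
    simp only [Walk.length_append, Walk.length_cons, Walk.drop_length, Walk.take_length] at h1
    have hne : i ≠ j := by rintro rfl; exact hadj.ne rfl
    have : j = i + 1 := by omega
    subst this
    exact edge_mem w i (by omega)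
  simp only [Walk.support_cons, Walk.support_concat, Walk.edges_cons, Walk.edges_concat,
    List.mem_cons, List.concat_eq_append, List.mem_append, List.not_mem_nil, or_false] at hy hz hne
  have hy' : y = k ∨ y = x ∨ y ∈ w.support := by
    rcases hy with h | h | h | h <;> simp [h]
  have hz' : z = k ∨ z = x ∨ z ∈ w.support := by
    rcases hz with h | h | h | h <;> simp [h]
  apply hne
  rcases hy' with h1 | h1 | h1 <;> rcases hz' with h2 | h2 | h2
  · exact absurd (h1.trans h2.symm) hyz.ne
  · left; rw [h1, h2]
  · right; right; right; rw [h1, key2 _ _ h1 h2 hyz, Sym2.eq_swap]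
  · left; rw [h1, h2, Sym2.eq_swap]
  · exact absurd (h1.trans h2.symm) hyz.ne
  · right; left; rw [h1, key _ _ h1 h2 hyz]
  · right; right; right; rw [h2, key2 _ _ h2 h1 hyz.symm]
  · right; left; rw [h2, key _ _ h2 h1 hyz.symm, Sym2.eq_swap]
  · right; right; left
    obtain ⟨i, rfl, hi⟩ := Walk.mem_support_iff_exists_getVert.1 h1
    obtain ⟨j, rfl, hj⟩ := Walk.mem_support_iff_exists_getVert.1 h2
    rcases le_total i j with h | h
    · exact key3 i j h hj hyz
    · rw [Sym2.eq_swap]; exact key3 j i h hi hyz.symm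

/-- The outer neighbourhood of `D` is a clique. -/
def CliqueNbhd (G : SimpleGraph V) (D : Finset V) : Prop :=
  ∀ y ∉ D, ∀ z ∉ D, (∃ d ∈ D, G.Adj d y) → (∃ d ∈ D, G.Adj d z) → y ≠ z → G.Adj y z

lemma exists_full {G : SimpleGraph V} (hG : IsChordal G) (D : Finset V) (hD : D.Nonempty)
    (hK : CliqueNbhd G D)
    (hconn : ∀ D1 ⊆ D, D1.Nonempty → (∀ d ∈ D1, ∀ e ∈ D, e ∉ D1 → ¬ G.Adj d e) → D1 = D) :
    ∃ v ∈ D, ∀ y ∉ D, (∃ d ∈ D, G.Adj d y) → G.Adj v y := by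
  classical
  let N : V → Finset V := fun v => Finset.univ.filter fun y => y ∉ D ∧ G.Adj v y
  obtain ⟨v, hv, hmax⟩ := Finset.exists_max_image D (fun v => (N v).card) hD
  refine ⟨v, hv, ?_⟩
  intro k hkD hk
  by_contra hvk
  obtain ⟨u0, hu0, hu0k⟩ := hk
  have hreach : (D.filter fun u => ∃ w : G.Walk v u, ∀ z ∈ w.support, z ∈ D) = D := by
    apply hconn
    · exact Finset.filter_subset _ _
    · exact ⟨v, by simp only [Finset.mem_filter]; exact ⟨hv, Walk.nil, by simpa using hv⟩⟩
    · intro d hd e he hne hadj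
      apply hne
      simp only [Finset.mem_filter] at hd ⊢
      obtain ⟨hd, w, hw⟩ := hd
      refine ⟨he, w.concat hadj, ?_⟩
      intro z hz
      simp only [Walk.support_concat, List.concat_eq_append, List.mem_append, List.mem_singleton] at hz
      rcases hz with hz | rfl
      · exact hw z hz
      · exact he
  have hu0' := hu0
  rw [← hreach, Finset.mem_filter] at hu0'
  obtain ⟨-, w1, hw1⟩ := hu0'
  let P : ℕ → Prop := fun n => ∃ (u : V) (w : G.Walk v u), (∀ z ∈ w.support, z ∈ D) ∧
    G.Adj u k ∧ w.length = n
  have hP : ∃ n, P n := ⟨_, u0, w1, hw1, hu0k, rfl⟩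
  obtain ⟨u, w, hw, huk, hlen⟩ := Nat.find_spec hP
  have honly : ∀ z ∈ w.support, G.Adj z k → z = u := by
    intro z hz hzk
    by_contra hne
    have h1 := Nat.find_min' hP ⟨z, w.takeUntil z hz,
      (fun t ht => hw t (w.support_takeUntil_subset_support hz ht)), hzk, rfl⟩
    have := Walk.length_takeUntil_lt_length hz hne
    omega
  have huD : u ∈ D := hw u w.end_mem_support
  have hss : N v ⊂ N u := by
    rw [Finset.ssubset_iff_of_subset]
    · exact ⟨k, by simp [N, hkD, huk], by simp [N, hvk]⟩
    · intro x hx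
      simp only [N, Finset.mem_filter, Finset.mem_univ, true_and] at hx ⊢
      obtain ⟨hxD, hvx⟩ := hx
      refine ⟨hxD, ?_⟩
      have hxk : x ≠ k := by rintro rfl; exact hvk hvx
      have hadj := hK x hxD k hkD ⟨v, hv, hvx⟩ ⟨u, huD, huk⟩ hxk
      obtain ⟨z, hz, hxz, hzk⟩ := common hG {z | z ∈ w.support} x k hadj
        (fun h => hxD (hw _ h)) (fun h => hkD (hw _ h)) w (fun z hz => hz) hvx.symm huk
      rw [← honly z hz hzk]
      exact hxz.symm
  have := Finset.card_lt_card hss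
  have := hmax u huD
  omega

/-- The invariant of the induction. -/
structure Inv (G : SimpleGraph V) (D I Y : Finset V) : Prop where
  sub : I ⊆ D
  indep : IndepSet G I
  ysub : Y ⊆ D
  ydom : ∀ a ∈ D, Dm G Y a
  min : ∀ X ⊆ D, (∀ a ∈ I, Dm G X a) → Y.card ≤ X.card
  best : ∀ X ⊆ D, (∀ a ∈ I, Dm G X a) → X.card ≤ Y.card → ∀ y ∉ D, Dm G X y → Dm G Y y
  out : ∀ w ∈ I, ∀ y ∉ D, G.Adj w y → Dm G Y y
  repl : ∀ X, (∀ a ∈ I, Dm G X a) → ∃ X' : Finset V, (∀ z ∉ D, z ∈ X' ↔ z ∈ X) ∧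
    X'.card ≤ X.card ∧ (∀ a ∈ D, Dm G X' a) ∧ ∀ y ∉ D, Dm G X y → Dm G X' y

lemma Dm.mono {G : SimpleGraph V} {X X' : Finset V} {a : V} (h : Dm G X a) (hs : X ⊆ X') :
    Dm G X' a := by
  rcases h with h | ⟨w, hw, h⟩
  · exact Or.inl (hs h)
  · exact Or.inr ⟨w, hs hw, h⟩

lemma inv_empty (G : SimpleGraph V) : Inv G ∅ ∅ ∅ where
  sub := by simp
  indep := by intro u hu; simp at hu
  ysub := by simp
  ydom := by simp
  min := by simp
  best := by
    intro X hX _ _ y _ h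
    rwa [Finset.subset_empty.1 hX] at h
  out := by simp
  repl := fun X _ => ⟨X, by simp, le_rfl, by simp, fun _ _ h => h⟩

lemma dm_inter {G : SimpleGraph V} {D X : Finset V} {a : V} (ha : a ∈ D)
    (hX : ∀ x ∈ X, x ∉ D → ¬ G.Adj x a) (h : Dm G X a) : Dm G (X ∩ D) a := by
  rcases h with h | ⟨w, hw, h⟩
  · exact Or.inl (by simp [h, ha])
  · refine Or.inr ⟨w, ?_, h⟩
    by_contra hn
    exact hX w hw (fun hd => hn (by simp [hw, hd])) h

lemma inv_merge {G : SimpleGraph V} {D1 D2 I1 I2 Y1 Y2 : Finset V} (hd : Disjoint D1 D2)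
    (hno : ∀ d ∈ D1, ∀ e ∈ D2, ¬ G.Adj d e) (h1 : Inv G D1 I1 Y1) (h2 : Inv G D2 I2 Y2) :
    Inv G (D1 ∪ D2) (I1 ∪ I2) (Y1 ∪ Y2) := by
  have hdY : Disjoint Y1 Y2 := Finset.disjoint_of_subset_left h1.ysub
    (Finset.disjoint_of_subset_right h2.ysub hd)
  have hcY : (Y1 ∪ Y2).card = Y1.card + Y2.card := Finset.card_union_of_disjoint hdY
  have n12 : ∀ z ∈ D1, z ∉ D2 := fun z hz => Finset.disjoint_left.1 hd hz
  have split : ∀ X ⊆ D1 ∪ D2, (∀ a ∈ I1 ∪ I2, Dm G X a) →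
      (∀ a ∈ I1, Dm G (X ∩ D1) a) ∧ (∀ a ∈ I2, Dm G (X ∩ D2) a) ∧
      X.card = (X ∩ D1).card + (X ∩ D2).card ∧ X = (X ∩ D1) ∪ (X ∩ D2) := by
    intro X hX hdom
    have hXe : X = (X ∩ D1) ∪ (X ∩ D2) := by
      rw [← Finset.inter_union_distrib_left]
      exact (Finset.inter_eq_left.2 hX).symm
    refine ⟨?_, ?_, ?_, hXe⟩
    · intro a ha
      refine dm_inter (h1.sub ha) ?_ (hdom a (Finset.mem_union_left _ ha))
      intro x hx hxD hadj
      have := Finset.mem_union.1 (hX hx)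
      exact hno a (h1.sub ha) x (by tauto) hadj.symm
    · intro a ha
      refine dm_inter (h2.sub ha) ?_ (hdom a (Finset.mem_union_right _ ha))
      intro x hx hxD hadj
      have := Finset.mem_union.1 (hX hx)
      exact hno x (by tauto) a (h2.sub ha) hadj
    · conv_lhs => rw [hXe]
      apply Finset.card_union_of_disjoint
      exact Finset.disjoint_of_subset_left Finset.inter_subset_right
        (Finset.disjoint_of_subset_right Finset.inter_subset_right hd)
  refine ⟨Finset.union_subset_union h1.sub h2.sub, ?_,
    Finset.union_subset_union h1.ysub h2.ysub, ?_, ?_, ?_, ?_, ?_⟩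
  · intro u hu v hv hadj
    rcases Finset.mem_union.1 hu with hu | hu <;> rcases Finset.mem_union.1 hv with hv | hv
    · exact h1.indep u hu v hv hadj
    · exact hno u (h1.sub hu) v (h2.sub hv) hadj
    · exact hno v (h1.sub hv) u (h2.sub hu) hadj.symm
    · exact h2.indep u hu v hv hadj
  · intro a ha
    rcases Finset.mem_union.1 ha with ha | ha
    · exact (h1.ydom a ha).mono Finset.subset_union_left
    · exact (h2.ydom a ha).mono Finset.subset_union_right
  · intro X hX hdom
    obtain ⟨ha, hb, hc, -⟩ := split X hX hdom
    have := h1.min _ Finset.inter_subset_right ha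
    have := h2.min _ Finset.inter_subset_right hb
    omega
  · intro X hX hdom hcard y hy hXy
    obtain ⟨ha, hb, hc, hXe⟩ := split X hX hdom
    have e1 := h1.min _ Finset.inter_subset_right ha
    have e2 := h2.min _ Finset.inter_subset_right hb
    have hy' : y ∉ D1 ∧ y ∉ D2 := by simpa using hy
    have : Dm G (X ∩ D1) y ∨ Dm G (X ∩ D2) y := by
      rcases hXy with h | ⟨w, hw, h⟩
      · exact absurd (hX h) hy
      · rw [hXe] at hw
        rcases Finset.mem_union.1 hw with hw | hw
        · exact Or.inl (Or.inr ⟨w, hw, h⟩)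
        · exact Or.inr (Or.inr ⟨w, hw, h⟩)
    rcases this with h | h
    · exact (h1.best _ Finset.inter_subset_right ha (by omega) y hy'.1 h).mono
        Finset.subset_union_left
    · exact (h2.best _ Finset.inter_subset_right hb (by omega) y hy'.2 h).mono
        Finset.subset_union_right
  · intro w hw y hy hadj
    have hy' : y ∉ D1 ∧ y ∉ D2 := by simpa using hy
    rcases Finset.mem_union.1 hw with hw | hw
    · exact (h1.out w hw y hy'.1 hadj).mono Finset.subset_union_left
    · exact (h2.out w hw y hy'.2 hadj).mono Finset.subset_union_right
  · intro X hdom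
    obtain ⟨X1, a1, b1, c1, d1⟩ := h1.repl X (fun a ha => hdom a (Finset.mem_union_left _ ha))
    obtain ⟨X2, a2, b2, c2, d2⟩ := h2.repl X1 (fun a ha => d1 a
      (fun h => n12 a h (h2.sub ha)) (hdom a (Finset.mem_union_right _ ha)))
    refine ⟨X2, ?_, b2.trans b1, ?_, ?_⟩
    · intro z hz
      have hz' : z ∉ D1 ∧ z ∉ D2 := by simpa using hz
      rw [a2 z hz'.2, a1 z hz'.1]
    · intro a ha
      rcases Finset.mem_union.1 ha with ha | ha
      · exact d2 a (n12 a ha) (c1 a ha)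
      · exact c2 a ha
    · intro y hy h
      have hy' : y ∉ D1 ∧ y ∉ D2 := by simpa using hy
      exact d2 y hy'.2 (d1 y hy'.1 h)

lemma inv_step {G : SimpleGraph V} {D0 I0 Y0 : Finset V} {v : V} (hv : v ∉ D0)
    (hK : CliqueNbhd G (insert v D0))
    (hfull : ∀ y ∉ insert v D0, (∃ d ∈ insert v D0, G.Adj d y) → G.Adj v y)
    (h0 : Inv G D0 I0 Y0) : ∃ I Y, Inv G (insert v D0) I Y := by
  classical
  -- replacement, given that some element of `X` is `v` or a later neighbour of `v`
  have hvD : ∀ y ∉ insert v D0, y ∉ D0 := fun y hy h => hy (Finset.mem_insert_of_mem h)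
  have replA : ∀ X, (∀ a ∈ I0, Dm G X a) → (∃ x ∈ X, x ∉ D0 ∧ (x = v ∨ G.Adj x v)) →
      ∃ X' : Finset V, (∀ z ∉ insert v D0, z ∈ X' ↔ z ∈ X) ∧ (v ∈ X' ↔ v ∈ X) ∧
      X'.card ≤ X.card ∧ (∀ a ∈ insert v D0, Dm G X' a) ∧
      ∀ y ∉ insert v D0, Dm G X y → Dm G X' y := by
    rintro X hX ⟨x, hx, hxD, hxv⟩
    obtain ⟨X', a, b, c, d⟩ := h0.repl X hX
    refine ⟨X', fun z hz => a z (hvD z hz), a v hv, b, ?_, fun y hy => d y (hvD y hy)⟩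
    intro z hz
    rcases Finset.mem_insert.1 hz with rfl | hz
    · rcases hxv with rfl | hxv
      · exact Or.inl ((a x hxD).2 hx)
      · exact Or.inr ⟨x, (a x hxD).2 hx, hxv⟩
    · exact c z hz
  have inside : ∀ X, (¬ ∃ x ∈ X, x ∉ D0 ∧ (x = v ∨ G.Adj x v)) → ∀ a ∈ insert v D0,
      Dm G X a → Dm G (X ∩ D0) a := by
    intro X hX a ha h
    have hn : ∀ x ∈ X, x ∉ D0 → ¬ (x = v ∨ G.Adj x v) := fun x h1 h2 h3 => hX ⟨x, h1, h2, h3⟩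
    rcases h with h | ⟨w, hw, h⟩
    · by_cases had : a ∈ D0
      · exact Or.inl (by simp [h, had])
      · have : a = v := by simpa [had] using ha
        exact absurd (Or.inl this) (hn a h had)
    · by_cases hwd : w ∈ D0
      · exact Or.inr ⟨w, by simp [hw, hwd], h⟩
      · exfalso
        have hwv := hn w hw hwd
        apply hwv
        right
        exact (hfull w (by simp only [Finset.mem_insert]; tauto) ⟨a, ha, h.symm⟩).symm
  -- the two explicit replacements
  have cardsplit : ∀ X : Finset V, X.card = (X ∩ D0).card + (X \ D0).card := fun X =>
    (Finset.card_inter_add_card_sdiff X D0).symm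
  have replB : ∀ X : Finset V, (¬ ∃ x ∈ X, x ∉ D0 ∧ (x = v ∨ G.Adj x v)) →
      Y0.card < (X ∩ D0).card →
      ∃ X' : Finset V, (∀ z ∉ insert v D0, z ∈ X' ↔ z ∈ X) ∧ X'.card ≤ X.card ∧
      (∀ a ∈ insert v D0, Dm G X' a) ∧ ∀ y ∉ insert v D0, Dm G X y → Dm G X' y := by
    intro X hX hc
    refine ⟨insert v Y0 ∪ (X \ D0), ?_, ?_, ?_, ?_⟩
    · intro z hz
      have h1 := hvD z hz
      have h2 : z ∉ Y0 := fun h => h1 (h0.ysub h)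
      have h3 : z ≠ v := by rintro rfl; simp at hz
      simp [h1, h2, h3]
    · have := Finset.card_union_le (insert v Y0) (X \ D0)
      have := Finset.card_insert_le v Y0
      have := cardsplit X
      omega
    · intro a ha
      rcases Finset.mem_insert.1 ha with rfl | ha
      · exact Or.inl (by simp)
      · exact (h0.ydom a ha).mono (fun t ht => by simp [ht])
    · intro y hy h
      rcases h with h | ⟨w, hw, h⟩
      · exact Or.inl (by simp [h, hvD y hy])
      · by_cases hwd : w ∈ D0
        · exact Or.inr ⟨v, by simp, hfull y hy ⟨w, by simp [hwd], h⟩⟩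
        · exact Or.inr ⟨w, by simp [hw, hwd], h⟩
  by_cases hfree : Dm G Y0 v
  · -- `v` is free: keep `I0`
    have hrepl : ∀ X, (∀ a ∈ I0, Dm G X a) → ∃ X' : Finset V,
        (∀ z ∉ insert v D0, z ∈ X' ↔ z ∈ X) ∧
        X'.card ≤ X.card ∧ (∀ a ∈ insert v D0, Dm G X' a) ∧
        ∀ y ∉ insert v D0, Dm G X y → Dm G X' y := by
      intro X hX
      by_cases hm : ∃ x ∈ X, x ∉ D0 ∧ (x = v ∨ G.Adj x v)
      · obtain ⟨X', a, -, b⟩ := replA X hX hm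
        exact ⟨X', a, b⟩
      · have hin : ∀ a ∈ I0, Dm G (X ∩ D0) a := fun a ha =>
          inside X hm a (Finset.mem_insert_of_mem (h0.sub ha)) (hX a ha)
        by_cases hc : Y0.card < (X ∩ D0).card
        · exact replB X hm hc
        · refine ⟨Y0 ∪ (X \ D0), ?_, ?_, ?_, ?_⟩
          · intro z hz
            have h1 := hvD z hz
            have h2 : z ∉ Y0 := fun h => h1 (h0.ysub h)
            simp [h1, h2]
          · have := Finset.card_union_le Y0 (X \ D0)
            have := h0.min _ Finset.inter_subset_right hin
            have := cardsplit X
            omega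
          · intro a ha
            rcases Finset.mem_insert.1 ha with rfl | ha
            · exact hfree.mono Finset.subset_union_left
            · exact (h0.ydom a ha).mono Finset.subset_union_left
          · intro y hy h
            rcases h with h | ⟨w, hw, h⟩
            · exact Or.inl (by simp [h, hvD y hy])
            · by_cases hwd : w ∈ D0
              · exact (h0.best _ Finset.inter_subset_right hin (by omega) y (hvD y hy)
                  (Or.inr ⟨w, by simp [hw, hwd], h⟩)).mono Finset.subset_union_left
              · exact Or.inr ⟨w, by simp [hw, hwd], h⟩
    have hsub : I0 ⊆ insert v D0 := h0.sub.trans (Finset.subset_insert _ _)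
    by_cases hex : ∃ X ⊆ insert v D0, v ∈ X ∧ (∀ a ∈ I0, Dm G X a) ∧ X.card ≤ Y0.card
    · let F := (insert v D0).powerset.filter
        fun X => v ∈ X ∧ (∀ a ∈ I0, Dm G X a) ∧ X.card ≤ Y0.card
      have hF : F.Nonempty := by
        obtain ⟨X, hX, h⟩ := hex
        exact ⟨X, by simp only [F, Finset.mem_filter, Finset.mem_powerset]; exact ⟨hX, h⟩⟩
      obtain ⟨X, hXF, hXmin⟩ := Finset.exists_min_image F Finset.card hF
      simp only [F, Finset.mem_filter, Finset.mem_powerset] at hXF hXmin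
      obtain ⟨hXs, hvX, hXd, hXc⟩ := hXF
      obtain ⟨X', a, b, c, d, e⟩ := replA X hXd ⟨v, hvX, hv, Or.inl rfl⟩
      have hvX' := b.2 hvX
      refine ⟨I0, X', hsub, h0.indep, ?_, d, ?_, ?_, ?_, hrepl⟩
      · intro z hz
        by_contra hn
        exact hn (hXs ((a z hn).1 hz))
      · intro Z hZ hZd
        by_cases hvZ : v ∈ Z
        · by_cases hZc : Z.card ≤ Y0.card
          · exact c.trans (hXmin Z ⟨hZ, hvZ, hZd, hZc⟩)
          · omega
        · have := h0.min Z ((Finset.subset_insert_iff_of_notMem hvZ).1 hZ) hZd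
          omega
      · intro Z hZ _ _ y hy h
        rcases h with h | ⟨w, hw, h⟩
        · exact absurd (hZ h) hy
        · exact Or.inr ⟨v, hvX', hfull y hy ⟨w, hZ hw, h⟩⟩
      · intro w hw y hy h
        exact Or.inr ⟨v, hvX', hfull y hy ⟨w, hsub hw, h⟩⟩
    · have hbig : ∀ Z ⊆ insert v D0, (∀ a ∈ I0, Dm G Z a) → v ∈ Z → Y0.card < Z.card := by
        intro Z hZ hZd hvZ
        by_contra hn
        exact hex ⟨Z, hZ, hvZ, hZd, by omega⟩
      refine ⟨I0, Y0, hsub, h0.indep, h0.ysub.trans (Finset.subset_insert _ _), ?_, ?_, ?_, ?_,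
        hrepl⟩
      · intro a ha
        rcases Finset.mem_insert.1 ha with rfl | ha
        · exact hfree
        · exact h0.ydom a ha
      · intro Z hZ hZd
        by_cases hvZ : v ∈ Z
        · exact (hbig Z hZ hZd hvZ).le
        · exact h0.min Z ((Finset.subset_insert_iff_of_notMem hvZ).1 hZ) hZd
      · intro Z hZ hZd hc y hy h
        by_cases hvZ : v ∈ Z
        · have := hbig Z hZ hZd hvZ
          omega
        · exact h0.best Z ((Finset.subset_insert_iff_of_notMem hvZ).1 hZ) hZd hc y (hvD y hy) h
      · intro w hw y hy h
        exact h0.out w hw y (hvD y hy) h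
  · -- `v` is not free: add it
    have hnadj : ∀ w ∈ I0, ¬ G.Adj w v := fun w hw h => hfree (h0.out w hw v hv h)
    have hvY : v ∉ Y0 := fun h => hv (h0.ysub h)
    have hsub : insert v I0 ⊆ insert v D0 := Finset.insert_subset_insert _ h0.sub
    refine ⟨insert v I0, insert v Y0, hsub, ?_, Finset.insert_subset_insert _ h0.ysub,
      ?_, ?_, ?_, ?_, ?_⟩
    · intro x hx y hy hadj
      rcases Finset.mem_insert.1 hx with hx1 | hx1 <;>
        rcases Finset.mem_insert.1 hy with hy1 | hy1
      · exact hadj.ne (hx1.trans hy1.symm)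
      · exact hnadj y hy1 (hx1 ▸ hadj.symm)
      · exact hnadj x hx1 (hy1 ▸ hadj)
      · exact h0.indep x hx1 y hy1 hadj
    · intro a ha
      rcases Finset.mem_insert.1 ha with rfl | ha
      · exact Or.inl (by simp)
      · exact (h0.ydom a ha).mono (Finset.subset_insert _ _)
    · intro Z hZ hZd
      rw [Finset.card_insert_of_notMem hvY]
      by_cases hvZ : v ∈ Z
      · have h1 := h0.min (Z.erase v) (Finset.subset_insert_iff.1 hZ) (by
          intro a ha
          rcases hZd a (Finset.mem_insert_of_mem ha) with h | ⟨w, hw, h⟩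
          · refine Or.inl (Finset.mem_erase.2 ⟨?_, h⟩)
            rintro rfl
            exact hv (h0.sub ha)
          · refine Or.inr ⟨w, Finset.mem_erase.2 ⟨?_, hw⟩, h⟩
            rintro rfl
            exact hnadj a ha h.symm)
        have := Finset.card_erase_add_one hvZ
        omega
      · have hZ0 := (Finset.subset_insert_iff_of_notMem hvZ).1 hZ
        have hZd0 : ∀ a ∈ I0, Dm G Z a := fun a ha => hZd a (Finset.mem_insert_of_mem ha)
        by_contra hn
        exact hfree (h0.best Z hZ0 hZd0 (by omega) v hv (hZd v (by simp)))
    · intro Z hZ _ _ y hy h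
      rcases h with h | ⟨w, hw, h⟩
      · exact absurd (hZ h) hy
      · exact Or.inr ⟨v, by simp, hfull y hy ⟨w, hZ hw, h⟩⟩
    · intro w hw y hy h
      exact Or.inr ⟨v, by simp, hfull y hy ⟨w, hsub hw, h⟩⟩
    · intro X hX
      have hX0 : ∀ a ∈ I0, Dm G X a := fun a ha => hX a (Finset.mem_insert_of_mem ha)
      by_cases hm : ∃ x ∈ X, x ∉ D0 ∧ (x = v ∨ G.Adj x v)
      · obtain ⟨X', a, -, b⟩ := replA X hX0 hm
        exact ⟨X', a, b⟩
      · have hin : ∀ a ∈ I0, Dm G (X ∩ D0) a := fun a ha =>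
          inside X hm a (Finset.mem_insert_of_mem (h0.sub ha)) (hX0 a ha)
        have hinv := inside X hm v (by simp) (hX v (by simp))
        apply replB X hm
        by_contra hn
        exact hfree (h0.best _ Finset.inter_subset_right hin (by omega) v hv hinv)

lemma inv_all {G : SimpleGraph V} (hG : IsChordal G) : ∀ (n : ℕ) (D : Finset V), D.card = n →
    CliqueNbhd G D → ∃ I Y, Inv G D I Y := by
  intro n
  induction n using Nat.strong_induction_on with
  | _ n ih =>
    intro D hn hK
    rcases D.eq_empty_or_nonempty with rfl | hD
    · exact ⟨∅, ∅, inv_empty G⟩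
    by_cases hconn : ∀ D1 ⊆ D, D1.Nonempty →
        (∀ d ∈ D1, ∀ e ∈ D, e ∉ D1 → ¬ G.Adj d e) → D1 = D
    · obtain ⟨v, hv, hfull⟩ := exists_full hG D hD hK hconn
      have hins : insert v (D.erase v) = D := Finset.insert_erase hv
      have hmem : ∀ y, y ∉ D.erase v → y = v ∨ y ∉ D := by
        intro y hy
        by_contra! h
        exact hy (Finset.mem_erase.2 h)
      have hK' : CliqueNbhd G (D.erase v) := by
        rintro y hy z hz ⟨d, hd, hdy⟩ ⟨e, he, hez⟩ hne
        have hd' := Finset.mem_of_mem_erase hd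
        have he' := Finset.mem_of_mem_erase he
        rcases hmem y hy with hy1 | hy1 <;> rcases hmem z hz with hz1 | hz1
        · exact absurd (hy1.trans hz1.symm) hne
        · rw [hy1]; exact hfull z hz1 ⟨e, he', hez⟩
        · rw [hz1]; exact (hfull y hy1 ⟨d, hd', hdy⟩).symm
        · exact hK y hy1 z hz1 ⟨d, hd', hdy⟩ ⟨e, he', hez⟩ hne
      obtain ⟨I0, Y0, h0⟩ := ih _ (by rw [← hn]; exact Finset.card_erase_lt_of_mem hv)
        (D.erase v) rfl hK'
      have := inv_step (v := v) (Finset.notMem_erase v D) (by rwa [hins]) (by rwa [hins]) h0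
      rwa [hins] at this
    · push Not at hconn
      obtain ⟨D1, hD1, hne, hno, hneq⟩ := hconn
      have hss : D1 ⊂ D := hD1.ssubset_of_ne hneq
      have hK1 : CliqueNbhd G D1 := by
        rintro y hy z hz ⟨d, hd, hdy⟩ ⟨e, he, hez⟩ hne
        exact hK y (fun h => hno d hd y h hy hdy) z (fun h => hno e he z h hz hez)
          ⟨d, hD1 hd, hdy⟩ ⟨e, hD1 he, hez⟩ hne
      have hout : ∀ d ∈ D \ D1, ∀ y ∉ D \ D1, G.Adj d y → y ∉ D := by
        intro d hd y hy hadj hyD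
        rw [Finset.mem_sdiff] at hd hy
        have : y ∈ D1 := by by_contra h; exact hy ⟨hyD, h⟩
        exact hno y this d hd.1 hd.2 hadj.symm
      have hK2 : CliqueNbhd G (D \ D1) := by
        rintro y hy z hz ⟨d, hd, hdy⟩ ⟨e, he, hez⟩ hne
        exact hK y (hout d hd y hy hdy) z (hout e he z hz hez)
          ⟨d, (Finset.mem_sdiff.1 hd).1, hdy⟩ ⟨e, (Finset.mem_sdiff.1 he).1, hez⟩ hne
      obtain ⟨I1, Y1, h1⟩ := ih _ (by rw [← hn]; exact Finset.card_lt_card hss) D1 rfl hK1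
      obtain ⟨I2, Y2, h2⟩ := ih _ (by
        rw [← hn]; exact Finset.card_lt_card (Finset.sdiff_ssubset hD1 hne)) (D \ D1) rfl hK2
      have := inv_merge Finset.disjoint_sdiff (fun d hd e he =>
        hno d hd e (Finset.mem_sdiff.1 he).1 (Finset.mem_sdiff.1 he).2) h1 h2
      rw [Finset.union_sdiff_of_subset hD1] at this
      exact ⟨_, _, this⟩

end ChordDom

/-- For chordal graphs, `iγ(G) = γ(G)`. -/
theorem igamma_eq_gamma_of_chordal (G : SimpleGraph V) (hG : IsChordal G) :
    igamma G = gamma G := by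
  apply le_antisymm
  · have hne : {k | ∃ W : Finset V, W.card = k ∧ Dominates G W Finset.univ}.Nonempty :=
      ⟨_, Finset.univ, rfl, fun a ha => Or.inl ha⟩
    obtain ⟨W, hW, hd⟩ := Nat.sInf_mem hne
    apply Nat.sInf_le
    intro I _
    exact ⟨W, hW.le, fun a _ => hd a (Finset.mem_univ a)⟩
  · have hne : {k | ∀ I : Finset V, IndepSet G I →
        ∃ W : Finset V, W.card ≤ k ∧ Dominates G W I}.Nonempty :=
      ⟨Finset.univ.card, fun I _ => ⟨Finset.univ, le_rfl, fun a _ => Or.inl (Finset.mem_univ a)⟩⟩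
    have hm := Nat.sInf_mem hne
    obtain ⟨I, Y, h⟩ := ChordDom.inv_all hG _ (Finset.univ : Finset V) rfl
      (fun y hy => absurd (Finset.mem_univ y) hy)
    obtain ⟨X, hXc, hX⟩ := hm I h.indep
    obtain ⟨X', -, hc, hd, -⟩ := h.repl X hX
    have h1 : gamma G ≤ X'.card := Nat.sInf_le ⟨X', rfl, hd⟩
    exact h1.trans (hc.trans hXc)
end

section
/- Let G be a chordal graph on n vertices (not necessarily connected) with no isolated vertices, and suppose the statement 'NC(H) is (|V(H)| − γ(H) − 1)-collapsible' holds for each connected component H of G. Then NC(G) is (n − γ(G) − 1)-collapsible. -/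
variable {V : Type*} [Fintype V] [DecidableEq V]

open Finset


/-- Introduce an elementary collapse by membership characterization. -/
lemma elemCollapse_intro {d : ℕ} {K K' : Finset (Finset V)} (σ τ : Finset V)
    (hσ : σ ∈ K) (hτ : τ ∈ K) (hστ : σ ⊆ τ) (hmax : ∀ ρ ∈ K, σ ⊆ ρ → ρ ⊆ τ)
    (hd : σ.card ≤ d) (hK' : ∀ ρ, ρ ∈ K' ↔ ρ ∈ K ∧ ¬ σ ⊆ ρ) : ElemCollapse d K K' := by
  refine ⟨σ, ⟨hσ, τ, hτ, hστ, hmax⟩, hd, ?_⟩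
  ext ρ
  rw [hK' ρ, Finset.mem_filter]

lemma elemCollapse_elim {d : ℕ} {K K' : Finset (Finset V)} (h : ElemCollapse d K K') :
    ∃ σ τ : Finset V, σ ∈ K ∧ τ ∈ K ∧ σ ⊆ τ ∧ (∀ ρ ∈ K, σ ⊆ ρ → ρ ⊆ τ) ∧
      σ.card ≤ d ∧ ∀ ρ, ρ ∈ K' ↔ ρ ∈ K ∧ ¬ σ ⊆ ρ := by
  obtain ⟨σ, ⟨hσ, τ, hτ, hστ, hmax⟩, hd, rfl⟩ := h
  exact ⟨σ, τ, hσ, hτ, hστ, hmax, hd, fun ρ => by rw [Finset.mem_filter]⟩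

lemma chain_subset {d : ℕ} {K K' : Finset (Finset V)}
    (h : Relation.ReflTransGen (ElemCollapse d) K K') : K' ⊆ K := by
  induction h with
  | refl => exact fun _ h => h
  | tail _ h2 ih =>
    obtain ⟨σ, τ, -, -, -, -, -, hK⟩ := elemCollapse_elim h2
    exact fun ρ hρ => ih ((hK ρ).1 hρ).1

lemma chain_mono {d d' : ℕ} (hd : d ≤ d') {K K' : Finset (Finset V)}
    (h : Relation.ReflTransGen (ElemCollapse d) K K') :
    Relation.ReflTransGen (ElemCollapse d') K K' := by
  refine Relation.ReflTransGen.mono ?_ _ _ h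
  rintro a b ⟨σ, h1, h2, h3⟩
  exact ⟨σ, h1, h2.trans hd, h3⟩

lemma union_inter_left {U1 U2 A B : Finset V} (hU : Disjoint U1 U2) (hA : A ⊆ U1) (hB : B ⊆ U2) :
    (A ∪ B) ∩ U1 = A := by
  ext v
  have h0 : v ∈ U1 → v ∉ U2 := fun h => Finset.disjoint_left.1 hU h
  have := @hA v
  have := @hB v
  simp only [Finset.mem_inter, Finset.mem_union]
  tauto

lemma union_inter_right {U1 U2 A B : Finset V} (hU : Disjoint U1 U2) (hA : A ⊆ U1) (hB : B ⊆ U2) :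
    (A ∪ B) ∩ U2 = B := by
  rw [Finset.union_comm]
  exact union_inter_left hU.symm hB hA

/-- The intermediate complex. -/
def ZC (U1 U2 : Finset V) (K1 L K K' : Finset (Finset V)) : Finset (Finset V) :=
  (U1 ∪ U2).powerset.filter fun W =>
    W ∩ U1 ∈ K1 ∨ W ∩ U2 ∈ K' ∨ (W ∩ U2 ∈ K ∧ W ∩ U1 ∈ L)

/-- The union complex. -/
def XC (U1 U2 : Finset V) (K1 K : Finset (Finset V)) : Finset (Finset V) :=
  (U1 ∪ U2).powerset.filter fun W => W ∩ U1 ∈ K1 ∨ W ∩ U2 ∈ K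

lemma ZC_chain {U1 U2 : Finset V} (hU : Disjoint U1 U2) {K1 K K' : Finset (Finset V)}
    {k d : ℕ} (hKU : ∀ A ∈ K, A ⊆ U2) (hE : ElemCollapse d K K') {L : Finset (Finset V)}
    (hLU : ∀ A ∈ L, A ⊆ U1) (hL : Relation.ReflTransGen (ElemCollapse k) L K1) :
    Relation.ReflTransGen (ElemCollapse (k + d)) (ZC U1 U2 K1 L K K')
      (ZC U1 U2 K1 K1 K K') := by
  obtain ⟨σ, τ, hσ, hτ, hστ, hmax, hd, hK'⟩ := elemCollapse_elim hE
  induction hL using Relation.ReflTransGen.head_induction_on with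
  | refl => exact Relation.ReflTransGen.refl
  | @head L L' h1 h2 ih =>
    obtain ⟨α, β, hα, hβ, hαβ, hmax1, hk, hL'⟩ := elemCollapse_elim h1
    have hsub := chain_subset h2
    refine Relation.ReflTransGen.head ?_ (ih fun A hA => hLU A ((hL' A).1 hA).1)
    have hαU := hLU α hα
    have hβU := hLU β hβ
    have hσU := hKU σ hσ
    have hτU := hKU τ hτ
    have hK1 : ∀ W : Finset V, α ⊆ W → W ∩ U1 ∉ K1 := fun W hW hin =>
      ((hL' _).1 (hsub hin)).2 (Finset.subset_inter hW hαU)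
    have hKK : ∀ W : Finset V, σ ⊆ W → W ∩ U2 ∉ K' := fun W hW hin =>
      ((hK' _).1 hin).2 (Finset.subset_inter hW hσU)
    refine elemCollapse_intro (α ∪ σ) (β ∪ τ) ?_ ?_ (Finset.union_subset_union hαβ hστ) ?_ ?_ ?_
    · rw [ZC, Finset.mem_filter, Finset.mem_powerset, union_inter_left hU hαU hσU,
        union_inter_right hU hαU hσU]
      exact ⟨Finset.union_subset_union hαU hσU, Or.inr (Or.inr ⟨hσ, hα⟩)⟩
    · rw [ZC, Finset.mem_filter, Finset.mem_powerset, union_inter_left hU hβU hτU,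
        union_inter_right hU hβU hτU]
      exact ⟨Finset.union_subset_union hβU hτU, Or.inr (Or.inr ⟨hτ, hβ⟩)⟩
    · intro W hW hs
      rw [ZC, Finset.mem_filter, Finset.mem_powerset] at hW
      have ha := Finset.union_subset_left hs
      have hb := Finset.union_subset_right hs
      rcases hW.2 with h | h | ⟨h, h'⟩
      · exact absurd h (hK1 W ha)
      · exact absurd h (hKK W hb)
      · have e1 := hmax _ h (Finset.subset_inter hb hσU)
        have e2 := hmax1 _ h' (Finset.subset_inter ha hαU)
        intro v hv
        rcases Finset.mem_union.1 (hW.1 hv) with hv1 | hv1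
        · exact Finset.mem_union_left _ (e2 (Finset.mem_inter.2 ⟨hv, hv1⟩))
        · exact Finset.mem_union_right _ (e1 (Finset.mem_inter.2 ⟨hv, hv1⟩))
    · exact (Finset.card_union_le _ _).trans (Nat.add_le_add hk hd)
    · intro W
      simp only [ZC, Finset.mem_filter, Finset.mem_powerset]
      have a1 := hL' (W ∩ U1)
      have a2 := hK' (W ∩ U2)
      have a3 := hK1 W
      have a4 := hKK W
      have a5 : α ⊆ W ∩ U1 ↔ α ⊆ W :=
        ⟨fun h => h.trans Finset.inter_subset_left, fun h => Finset.subset_inter h hαU⟩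
      have a6 : σ ⊆ W ∩ U2 ↔ σ ⊆ W :=
        ⟨fun h => h.trans Finset.inter_subset_left, fun h => Finset.subset_inter h hσU⟩
      rw [Finset.union_subset_iff]
      rw [a5] at a1
      rw [a6] at a2
      constructor
      · rintro ⟨hW, h | h | ⟨h, h'⟩⟩
        · exact ⟨⟨hW, Or.inl h⟩, fun hs => a3 hs.1 h⟩
        · exact ⟨⟨hW, Or.inr (Or.inl h)⟩, fun hs => a4 hs.2 h⟩
        · exact ⟨⟨hW, Or.inr (Or.inr ⟨h, (a1.1 h').1⟩)⟩, fun hs => (a1.1 h').2 hs.1⟩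
      · rintro ⟨⟨hW, h | h | ⟨h, h'⟩⟩, hn⟩
        · exact ⟨hW, Or.inl h⟩
        · exact ⟨hW, Or.inr (Or.inl h)⟩
        · by_cases hαW : α ⊆ W
          · exact ⟨hW, Or.inr (Or.inl (a2.2 ⟨h, fun hs => hn ⟨hαW, hs⟩⟩))⟩
          · exact ⟨hW, Or.inr (Or.inr ⟨h, a1.2 ⟨h', hαW⟩⟩)⟩

lemma XC_chain {U1 U2 : Finset V} (hU : Disjoint U1 U2) {K1 K : Finset (Finset V)}
    {k d : ℕ} (hKU : ∀ A ∈ K, A ⊆ U2) (hE : Collapsible d K)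
    (hL : Relation.ReflTransGen (ElemCollapse k) U1.powerset K1) :
    Relation.ReflTransGen (ElemCollapse (k + d)) (XC U1 U2 K1 K) (XC U1 U2 K1 ∅) := by
  unfold Collapsible at hE
  induction hE using Relation.ReflTransGen.head_induction_on with
  | refl => exact Relation.ReflTransGen.refl
  | @head K K' h1 h2 ih =>
    have hsub : K' ⊆ K := chain_subset (Relation.ReflTransGen.single h1)
    have h := ZC_chain hU hKU h1 (fun A hA => Finset.mem_powerset.1 hA) hL
    have e1 : ZC U1 U2 K1 U1.powerset K K' = XC U1 U2 K1 K := by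
      ext W
      have := @hsub (W ∩ U2)
      have h' : W ∩ U1 ∈ U1.powerset := Finset.mem_powerset.2 Finset.inter_subset_right
      simp only [ZC, XC, Finset.mem_filter]
      tauto
    have e2 : ZC U1 U2 K1 K1 K K' = XC U1 U2 K1 K' := by
      ext W
      simp only [ZC, XC, Finset.mem_filter]
      tauto
    rw [e1, e2] at h
    exact h.trans (ih fun A hA => hKU A (hsub hA))

lemma XC_empty {U1 U2 : Finset V} (hU : Disjoint U1 U2) {K1 : Finset (Finset V)}
    {d : ℕ} (hKU : ∀ A ∈ K1, A ⊆ U1) (hE : Collapsible d K1) :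
    Collapsible d (XC U1 U2 K1 ∅) := by
  unfold Collapsible at *
  induction hE using Relation.ReflTransGen.head_induction_on with
  | refl =>
    have : XC U1 U2 ∅ ∅ = ∅ := by
      ext W
      simp [XC]
    rw [this]
  | @head K K' h1 h2 ih =>
    have hsub : K' ⊆ K := chain_subset (Relation.ReflTransGen.single h1)
    refine Relation.ReflTransGen.head ?_ (ih fun A hA => hKU A (hsub hA))
    obtain ⟨σ, τ, hσ, hτ, hστ, hmax, hd, hK'⟩ := elemCollapse_elim h1
    have hσU := hKU σ hσ
    have hτU := hKU τ hτ
    refine elemCollapse_intro σ (τ ∪ U2) ?_ ?_ (hστ.trans Finset.subset_union_left) ?_ hd ?_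
    · rw [XC, Finset.mem_filter, Finset.mem_powerset, Finset.inter_eq_left.2 hσU]
      exact ⟨hσU.trans Finset.subset_union_left, Or.inl hσ⟩
    · rw [XC, Finset.mem_filter, Finset.mem_powerset, union_inter_left hU hτU (Finset.Subset.refl _)]
      exact ⟨Finset.union_subset_union hτU (Finset.Subset.refl _), Or.inl hτ⟩
    · intro W hW hs
      rw [XC, Finset.mem_filter, Finset.mem_powerset] at hW
      rcases hW.2 with h | h
      · have e2 := hmax _ h (Finset.subset_inter hs hσU)
        intro v hv
        rcases Finset.mem_union.1 (hW.1 hv) with hv1 | hv1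
        · exact Finset.mem_union_left _ (e2 (Finset.mem_inter.2 ⟨hv, hv1⟩))
        · exact Finset.mem_union_right _ hv1
      · simp at h
    · intro W
      simp only [XC, Finset.mem_filter, Finset.mem_powerset, Finset.notMem_empty, or_false]
      have a1 := hK' (W ∩ U1)
      have a5 : σ ⊆ W ∩ U1 ↔ σ ⊆ W :=
        ⟨fun h => h.trans Finset.inter_subset_left, fun h => Finset.subset_inter h hσU⟩
      rw [a5] at a1
      tauto

lemma XC_collapsible {U1 U2 : Finset V} (hU : Disjoint U1 U2) {K1 K2 : Finset (Finset V)}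
    {d1 d2 k D : ℕ} (hK1 : ∀ A ∈ K1, A ⊆ U1) (hK2 : ∀ A ∈ K2, A ⊆ U2)
    (h1 : Collapsible d1 K1) (h2 : Collapsible d2 K2)
    (hL : Relation.ReflTransGen (ElemCollapse k) U1.powerset K1)
    (hD1 : d1 ≤ D) (hD : k + d2 ≤ D) : Collapsible D (XC U1 U2 K1 K2) :=
  (chain_mono hD (XC_chain hU hK2 h2 hL)).trans (chain_mono hD1 (XC_empty hU hK1 h1))

/-! ### Shelling of the independence complex of a chordal graph -/

/-- `F` is a maximal independent subset of `U`. -/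
def MaxIn (G : SimpleGraph V) (U F : Finset V) : Prop :=
  F ⊆ U ∧ IndepSet G F ∧ ∀ v ∈ U, v ∉ F → ∃ w ∈ F, G.Adj w v

/-- One shelling step. -/
def ShStep (G : SimpleGraph V) (U : Finset V) (S S' : Finset V → Prop) : Prop :=
  ∃ F R, MaxIn G U F ∧ ¬ S F ∧ R ⊆ F ∧ ¬ S R ∧ (∀ T ⊆ F, ¬ S T → R ⊆ T) ∧
    ∀ T, S' T ↔ S T ∨ T ⊆ F

lemma exists_path_walk (G : SimpleGraph V) (v : ℕ → V) (h : ∀ i, G.Adj (v i) (v (i + 1))) (n : ℕ) :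
    ∃ p : G.Walk (v 0) (v n), p.support = (List.range (n + 1)).map v ∧
      p.edges = (List.range n).map fun k => s(v k, v (k + 1)) := by
  induction n with
  | zero => exact ⟨SimpleGraph.Walk.nil, by simp, by simp⟩
  | succ n ih =>
    obtain ⟨p, h1, h2⟩ := ih
    refine ⟨p.concat (h n), ?_, ?_⟩
    · rw [SimpleGraph.Walk.support_concat, h1, List.range_succ (n := n + 1)]
      simp
    · rw [SimpleGraph.Walk.edges_concat, h2, List.range_succ (n := n)]
      simp

lemma no_bad_seq (G : SimpleGraph V) (hG : IsChordal G) (v : ℕ → V)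
    (h : ∀ i, G.Adj (v i) (v (i + 1))) (h2 : ∀ i, ¬ G.Adj (v i) (v (i + 2)))
    (h2' : ∀ i, v i ≠ v (i + 2)) : False := by
  classical
  -- minimal span
  have hex : ∃ m, 2 ≤ m ∧ ∃ i, v i = v (i + m) ∨ G.Adj (v i) (v (i + m)) := by
    obtain ⟨a, b, hab, he⟩ := Finite.exists_ne_map_eq_of_infinite v
    wlog hlt : a < b generalizing a b
    · exact this b a hab.symm he.symm (by omega)
    refine ⟨b - a, ?_, a, Or.inl ?_⟩
    · by_contra hc
      have : b = a + 1 := by omega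
      subst this
      exact (h a).ne he
    · rw [he]; congr 1; omega
  obtain ⟨hm2, i, hi⟩ := Nat.find_spec hex
  have hmin : ∀ m', 2 ≤ m' → m' < Nat.find hex →
      ∀ i, v i ≠ v (i + m') ∧ ¬ G.Adj (v i) (v (i + m')) := by
    intro m' h1 h2 i
    have := Nat.find_min hex h2
    push Not at this
    exact this h1 i
  generalize Nat.find hex = m at *
  have hm3 : 3 ≤ m := by
    by_contra hc
    have : m = 2 := by omega
    subst this
    rcases hi with hi | hi
    · exact h2' i hi
    · exact h2 i hi
  have hadj : G.Adj (v i) (v (i + m)) := by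
    rcases hi with hi | hi
    · exfalso
      have := (hmin (m - 1) (by omega) (by omega) i).2
      have e := h (i + (m - 1))
      rw [show i + (m - 1) + 1 = i + m by omega, ← hi] at e
      exact this e.symm
    · exact hi
  set w : ℕ → V := fun k => v (i + k) with hw
  have key : ∀ a b, a < b → b ≤ m → w a ≠ w b ∧
      (G.Adj (w a) (w b) → b = a + 1 ∨ (a = 0 ∧ b = m)) := by
    intro a b hab hbm
    by_cases h1 : b = a + 1
    · subst h1
      exact ⟨(h (i + a)).ne, fun _ => Or.inl rfl⟩
    by_cases h3 : b - a < m
    · have := hmin (b - a) (by omega) h3 (i + a)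
      rw [show i + a + (b - a) = i + b by omega] at this
      exact ⟨this.1, fun hh => absurd hh this.2⟩
    · have ha : a = 0 := by omega
      have hb : b = m := by omega
      subst ha hb
      exact ⟨hadj.ne, fun _ => Or.inr ⟨rfl, rfl⟩⟩
  have hinj : ∀ a b, a ≤ m → b ≤ m → w a = w b → a = b := by
    intro a b ha hb hab
    rcases lt_trichotomy a b with h | h | h
    · exact absurd hab (key a b h hb).1
    · exact h
    · exact absurd hab.symm (key b a h ha).1
  obtain ⟨p, hp1, hp2⟩ := exists_path_walk G w (fun k => h (i + k)) m
  have hpath : p.IsPath := by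
    rw [SimpleGraph.Walk.isPath_def, hp1]
    refine List.Nodup.map_on ?_ List.nodup_range
    intro a ha b hb hab
    rw [List.mem_range] at ha hb
    exact hinj a b (by omega) (by omega) hab
  have hadj' : G.Adj (w m) (w 0) := hadj.symm
  have hcyc : (SimpleGraph.Walk.cons hadj' p).IsCycle := by
    rw [SimpleGraph.Walk.cons_isCycle_iff]
    refine ⟨hpath, ?_⟩
    rw [hp2]
    intro hmem
    obtain ⟨k, hk, he⟩ := List.mem_map.1 hmem
    rw [List.mem_range] at hk
    rw [Sym2.eq_iff] at he
    rcases he with ⟨e1, e2⟩ | ⟨e1, e2⟩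
    · have := hinj _ _ (by omega) (by omega) e1
      omega
    · have := hinj _ _ (by omega) (by omega) e1
      have := hinj _ _ (by omega) (by omega) e2
      omega
  have hlen : 4 ≤ (SimpleGraph.Walk.cons hadj' p).length := by
    have := congrArg List.length hp1
    rw [SimpleGraph.Walk.length_support] at this
    simp at this
    rw [SimpleGraph.Walk.length_cons]
    omega
  obtain ⟨x, hx, y, hy, hxy, hne⟩ := hG _ _ hcyc hlen
  have hsup : ∀ x ∈ (SimpleGraph.Walk.cons hadj' p).support, ∃ a ≤ m, w a = x := by
    intro x hx
    rw [SimpleGraph.Walk.support_cons, hp1] at hx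
    rcases List.mem_cons.1 hx with hx | hx
    · exact ⟨m, le_rfl, hx.symm⟩
    · obtain ⟨a, ha, hax⟩ := List.mem_map.1 hx
      rw [List.mem_range] at ha
      exact ⟨a, by omega, hax⟩
  obtain ⟨a, ha, rfl⟩ := hsup x hx
  obtain ⟨b, hb, rfl⟩ := hsup y hy
  have fin : ∀ a b, a < b → b ≤ m → G.Adj (w a) (w b) →
      s(w a, w b) ∈ (SimpleGraph.Walk.cons hadj' p).edges := by
    intro a b hab hbm hadj
    rw [SimpleGraph.Walk.edges_cons, hp2]
    rcases (key a b hab hbm).2 hadj with h1 | ⟨h1, h1'⟩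
    · subst h1
      exact List.mem_cons_of_mem _ (List.mem_map.2 ⟨a, List.mem_range.2 (by omega), rfl⟩)
    · rw [h1, h1', Sym2.eq_swap]
      exact List.mem_cons_self
  rcases lt_trichotomy a b with h | h | h
  · exact hne (fin a b h hb hxy)
  · subst h
    exact G.loopless.irrefl _ hxy
  · rw [Sym2.eq_swap] at hne
    exact hne (fin b a h ha hxy.symm)

lemma exists_dominated (G : SimpleGraph V) (hG : IsChordal G) (U : Finset V)
    (hU : ¬ IndepSet G U) :
    ∃ x ∈ U, ∃ y ∈ U, G.Adj x y ∧ ∀ z ∈ U, G.Adj x z → z = y ∨ G.Adj y z := by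
  by_contra hcon
  push Not at hcon
  unfold IndepSet at hU
  push Not at hU
  obtain ⟨a, ha, b, hb, hab⟩ := hU
  let E := {p : V × V // p.1 ∈ U ∧ p.2 ∈ U ∧ G.Adj p.1 p.2}
  have hstep : ∀ p : E, ∃ q : E, q.1.1 = p.1.2 ∧ q.1.2 ≠ p.1.1 ∧ ¬ G.Adj p.1.1 q.1.2 := by
    rintro ⟨⟨x, y⟩, hx, hy, hxy⟩
    obtain ⟨z, hz, h1, h2, h3⟩ := hcon y hy x hx hxy.symm
    exact ⟨⟨(y, z), hy, hz, h1⟩, rfl, h2, h3⟩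
  choose f hf1 hf2 hf3 using hstep
  let e : ℕ → E := fun n => f^[n] ⟨(a, b), ha, hb, hab⟩
  have he : ∀ n, e (n + 1) = f (e n) := fun n => Function.iterate_succ_apply' f n _
  have hv1 : ∀ n, (e (n + 1)).1.1 = (e n).1.2 := fun n => by rw [he, hf1]
  refine no_bad_seq G hG (fun n => (e n).1.1) ?_ ?_ ?_
  · intro n
    simp only [hv1]
    exact (e n).2.2.2
  · intro n
    have : (e (n + 2)).1.1 = (f (e n)).1.2 := by rw [hv1 (n + 1), he]
    simp only [this]
    exact hf3 _
  · intro n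
    have : (e (n + 2)).1.1 = (f (e n)).1.2 := by rw [hv1 (n + 1), he]
    simp only [this]
    exact (hf2 _).symm

lemma shelling (G : SimpleGraph V) (hG : IsChordal G) (n : ℕ) : ∀ U : Finset V, U.card = n →
    Relation.ReflTransGen (ShStep G U) (fun _ => False) (fun T => T ⊆ U ∧ IndepSet G T) := by
  classical
  induction n using Nat.strong_induction_on with
  | _ n IH =>
  intro U hUn
  by_cases hind : IndepSet G U
  · refine Relation.ReflTransGen.single ⟨U, ∅, ⟨subset_rfl, hind, fun v hv h => absurd hv h⟩, id,
      Finset.empty_subset _, id, fun T _ _ => Finset.empty_subset _, fun T => ?_⟩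
    simp only [false_or]
    exact ⟨fun h => h.1, fun h => ⟨h, fun u hu v hv => hind u (h hu) v (h hv)⟩⟩
  obtain ⟨x, hx, y, hy, hxy, hdom⟩ := exists_dominated G hG U hind
  have h1 := IH (U.erase y).card (by rw [← hUn]; exact Finset.card_erase_lt_of_mem hy) _ rfl
  set U2 : Finset V := (U.erase y).filter fun z => ¬ G.Adj y z with hU2
  have hU2sub : U2 ⊆ U.erase y := Finset.filter_subset _ _
  have h2 := IH U2.card (by
    rw [← hUn]
    exact (Finset.card_le_card hU2sub).trans_lt (Finset.card_erase_lt_of_mem hy)) _ rfl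
  have hA : Relation.ReflTransGen (ShStep G U) (fun _ => False)
      (fun T => T ⊆ U.erase y ∧ IndepSet G T) := by
    refine Relation.ReflTransGen.mono ?_ _ _ h1
    rintro S S' ⟨F, R, ⟨hF1, hF2, hF3⟩, hrest⟩
    refine ⟨F, R, ⟨hF1.trans (Finset.erase_subset _ _), hF2, ?_⟩, hrest⟩
    intro v hv hvF
    by_cases hvy : v = y
    · subst hvy
      by_cases hxF : x ∈ F
      · exact ⟨x, hxF, hxy⟩
      · obtain ⟨w, hw, hwx⟩ := hF3 x (Finset.mem_erase.2 ⟨hxy.ne, hx⟩) hxF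
        refine ⟨w, hw, ?_⟩
        rcases hdom w (Finset.mem_of_mem_erase (hF1 hw)) hwx.symm with h | h
        · exact absurd (h ▸ hw) hvF
        · exact h.symm
    · exact hF3 v (Finset.mem_erase.2 ⟨hvy, hv⟩) hvF
  refine hA.trans ?_
  -- lift the second chain
  let φ : (Finset V → Prop) → (Finset V → Prop) := fun S T =>
    (T ⊆ U.erase y ∧ IndepSet G T) ∨ (y ∈ T ∧ S (T.erase y))
  have e0 : φ (fun _ => False) = fun T => T ⊆ U.erase y ∧ IndepSet G T := by
    funext T
    simp [φ]
  have e1 : φ (fun T => T ⊆ U2 ∧ IndepSet G T) = fun T => T ⊆ U ∧ IndepSet G T := by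
    funext T
    apply propext
    constructor
    · rintro (⟨h, h'⟩ | ⟨h, h', h''⟩)
      · exact ⟨h.trans (Finset.erase_subset _ _), h'⟩
      · have hTU : ∀ v ∈ T, v ≠ y → v ∈ U ∧ ¬ G.Adj y v := by
          intro v hv hvy
          have := h' (Finset.mem_erase.2 ⟨hvy, hv⟩)
          rw [hU2, Finset.mem_filter] at this
          exact ⟨Finset.mem_of_mem_erase this.1, this.2⟩
        refine ⟨fun v hv => ?_, fun u hu v hv => ?_⟩
        · by_cases hvy : v = y
          · exact hvy ▸ hy
          · exact (hTU v hv hvy).1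
        · by_cases huy : u = y
          · by_cases hvy : v = y
            · rw [huy, hvy]
              exact G.loopless.irrefl _
            · rw [huy]
              exact (hTU v hv hvy).2
          · by_cases hvy : v = y
            · rw [hvy]
              exact fun hh => (hTU u hu huy).2 hh.symm
            · exact h'' u (Finset.mem_erase.2 ⟨huy, hu⟩) v (Finset.mem_erase.2 ⟨hvy, hv⟩)
    · rintro ⟨h, h'⟩
      by_cases hyT : y ∈ T
      · refine Or.inr ⟨hyT, fun v hv => ?_, fun u hu v hv =>
          h' u (Finset.mem_of_mem_erase hu) v (Finset.mem_of_mem_erase hv)⟩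
        rw [Finset.mem_erase] at hv
        rw [hU2, Finset.mem_filter, Finset.mem_erase]
        exact ⟨⟨hv.1, h hv.2⟩, h' y hyT v hv.2⟩
      · exact Or.inl ⟨fun v hv => Finset.mem_erase.2 ⟨fun e => hyT (e ▸ hv), h hv⟩, h'⟩
  have hlift : Relation.ReflTransGen (ShStep G U) (φ fun _ => False)
      (φ fun T => T ⊆ U2 ∧ IndepSet G T) := by
    refine Relation.ReflTransGen.lift φ ?_ _ _ h2
    rintro S S' ⟨F, R, ⟨hF1, hF2, hF3⟩, hSF, hRF, hSR, hmin, hS'⟩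
    have hyF : y ∉ F := fun h => Finset.notMem_erase y U (hU2sub (hF1 h))
    have hyR : y ∉ R := fun h => hyF (hRF h)
    have hFy : ∀ v ∈ F, ¬ G.Adj y v := fun v hv => by
      have := hF1 hv
      rw [hU2, Finset.mem_filter] at this
      exact this.2
    have hsubF : ∀ T, T ⊆ insert y F → y ∉ T → T ⊆ U.erase y ∧ IndepSet G T := by
      intro T hT hyT
      have hTF : T ⊆ F := (Finset.subset_insert_iff_of_notMem hyT).1 hT
      exact ⟨(hTF.trans hF1).trans hU2sub, fun u hu v hv => hF2 u (hTF hu) v (hTF hv)⟩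
    refine ⟨insert y F, insert y R, ⟨?_, ?_, ?_⟩, ?_, Finset.insert_subset_insert _ hRF, ?_, ?_, ?_⟩
    · exact Finset.insert_subset hy ((hF1.trans hU2sub).trans (Finset.erase_subset _ _))
    · intro u hu v hv
      rcases Finset.mem_insert.1 hu with rfl | hu
      · rcases Finset.mem_insert.1 hv with rfl | hv
        · exact G.loopless.irrefl _
        · exact hFy v hv
      · rcases Finset.mem_insert.1 hv with hvy | hv
        · rw [hvy]
          exact fun hh => hFy u hu hh.symm
        · exact hF2 u hu v hv
    · intro v hv hvF
      rw [Finset.mem_insert, not_or] at hvF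
      by_cases hyv : G.Adj y v
      · exact ⟨y, Finset.mem_insert_self _ _, hyv⟩
      · obtain ⟨w, hw, hwv⟩ := hF3 v (by
          rw [hU2, Finset.mem_filter, Finset.mem_erase]
          exact ⟨⟨hvF.1, hv⟩, hyv⟩) hvF.2
        exact ⟨w, Finset.mem_insert_of_mem hw, hwv⟩
    · rintro (⟨h, -⟩ | ⟨-, h⟩)
      · exact Finset.notMem_erase y U (h (Finset.mem_insert_self _ _))
      · rw [Finset.erase_insert hyF] at h
        exact hSF h
    · rintro (⟨h, -⟩ | ⟨-, h⟩)
      · exact Finset.notMem_erase y U (h (Finset.mem_insert_self _ _))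
      · rw [Finset.erase_insert hyR] at h
        exact hSR h
    · intro T hT hST
      by_cases hyT : y ∈ T
      · have hn : ¬ S (T.erase y) := fun h => hST (Or.inr ⟨hyT, h⟩)
        have := hmin (T.erase y) (by rwa [← Finset.subset_insert_iff]) hn
        exact Finset.insert_subset hyT (this.trans (Finset.erase_subset _ _))
      · exact absurd (Or.inl (hsubF T hT hyT)) hST
    · intro T
      simp only [φ, hS']
      rw [← Finset.subset_insert_iff]
      have := hsubF T
      tauto
  rw [e0, e1] at hlift
  exact hlift

open scoped Classical in
/-- Noncovers inside the vertex set `U`. -/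
noncomputable def NCU (G : SimpleGraph V) (U : Finset V) : Finset (Finset V) :=
  U.powerset.filter fun W => ¬ IndepSet G (U \ W)

lemma powerset_chain (G : SimpleGraph V) (hG : IsChordal G) (U : Finset V) (k : ℕ)
    (hk : ∀ F, MaxIn G U F → U.card - F.card ≤ k) :
    Relation.ReflTransGen (ElemCollapse k) U.powerset (NCU G U) := by
  classical
  let ψ : (Finset V → Prop) → Finset (Finset V) := fun S => U.powerset.filter fun W => ¬ S (U \ W)
  have e0 : ψ (fun _ => False) = U.powerset := by
    ext W
    simp [ψ]
  have e1 : ψ (fun T => T ⊆ U ∧ IndepSet G T) = NCU G U := by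
    ext W
    simp [ψ, NCU]
  rw [← e0, ← e1]
  refine Relation.ReflTransGen.lift ψ ?_ _ _ (shelling G hG _ U rfl)
  rintro S S' ⟨F, R, hF, hSF, hRF, hSR, hmin, hS'⟩
  have hFU := hF.1
  have hRU := hRF.trans hFU
  have hsw : ∀ A B : Finset V, U \ A ⊆ B ↔ U \ B ⊆ A := fun A B => sdiff_le_comm
  refine elemCollapse_intro (U \ F) (U \ R) ?_ ?_ (Finset.sdiff_subset_sdiff subset_rfl hRF) ?_ ?_ ?_
  · simp only [ψ, Finset.mem_filter, Finset.mem_powerset, Finset.sdiff_sdiff_eq_self hFU]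
    exact ⟨Finset.sdiff_subset, hSF⟩
  · simp only [ψ, Finset.mem_filter, Finset.mem_powerset, Finset.sdiff_sdiff_eq_self hRU]
    exact ⟨Finset.sdiff_subset, hSR⟩
  · intro W hW hs
    simp only [ψ, Finset.mem_filter, Finset.mem_powerset] at hW
    have h1 := hmin (U \ W) ((hsw _ _).1 hs) hW.2
    intro v hv
    rw [Finset.mem_sdiff]
    exact ⟨hW.1 hv, fun hR => (Finset.mem_sdiff.1 (h1 hR)).2 hv⟩
  · rw [Finset.card_sdiff_of_subset hFU]
    exact hk F hF
  · intro W
    simp only [ψ, Finset.mem_filter, hS', hsw F W]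
    tauto

/-! ### Transport along an embedding -/

lemma elemCollapse_map {α : Type*} [Fintype α] [DecidableEq α] (f : α ↪ V) {d : ℕ}
    {K K' : Finset (Finset α)} (h : ElemCollapse d K K') :
    ElemCollapse d (K.image (Finset.map f)) (K'.image (Finset.map f)) := by
  obtain ⟨σ, τ, hσ, hτ, hστ, hmax, hd, hK'⟩ := elemCollapse_elim h
  refine elemCollapse_intro (σ.map f) (τ.map f) (Finset.mem_image_of_mem _ hσ)
    (Finset.mem_image_of_mem _ hτ) (Finset.map_subset_map.2 hστ) ?_ ?_ ?_
  · intro ρ hρ hs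
    obtain ⟨A, hA, rfl⟩ := Finset.mem_image.1 hρ
    exact Finset.map_subset_map.2 (hmax A hA (Finset.map_subset_map.1 hs))
  · rwa [Finset.card_map]
  · intro ρ
    constructor
    · intro hρ
      obtain ⟨A, hA, rfl⟩ := Finset.mem_image.1 hρ
      have := (hK' A).1 hA
      exact ⟨Finset.mem_image_of_mem _ this.1, fun hs => this.2 (Finset.map_subset_map.1 hs)⟩
    · rintro ⟨hρ, hs⟩
      obtain ⟨A, hA, rfl⟩ := Finset.mem_image.1 hρ
      exact Finset.mem_image_of_mem _ ((hK' A).2 ⟨hA, fun h => hs (Finset.map_subset_map.2 h)⟩)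

lemma collapsible_map {α : Type*} [Fintype α] [DecidableEq α] (f : α ↪ V) {d : ℕ}
    {K : Finset (Finset α)} (h : Collapsible d K) :
    Collapsible d (K.image (Finset.map f)) := by
  have := Relation.ReflTransGen.lift (p := ElemCollapse d)
    (fun K : Finset (Finset α) => K.image (Finset.map f)) (fun a b => elemCollapse_map f) _ _ h
  simpa [Collapsible, Function.onFun] using this

lemma NC_induce (G : SimpleGraph V) (s : Set V) [Fintype s] [DecidableEq s]
    [DecidableRel (G.induce s).Adj] (U : Finset V) (hU : ∀ v, v ∈ U ↔ v ∈ s) :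
    (NC (G.induce s)).image (Finset.map (Function.Embedding.subtype fun v => v ∈ s)) =
      NCU G U := by
  classical
  have key : ∀ A : Finset s, IndepSet (G.induce s) Aᶜ ↔
      IndepSet G (U \ A.map (Function.Embedding.subtype fun v => v ∈ s)) := by
    intro A
    constructor
    · intro h u hu v hv
      simp only [Finset.mem_sdiff, Finset.mem_map, Function.Embedding.subtype_apply, hU] at hu hv
      exact h ⟨u, hu.1⟩ (Finset.mem_compl.2 fun hh => hu.2 ⟨_, hh, rfl⟩) ⟨v, hv.1⟩
        (Finset.mem_compl.2 fun hh => hv.2 ⟨_, hh, rfl⟩)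
    · intro h u hu v hv
      have aux : ∀ u : s, u ∈ Aᶜ →
          (u : V) ∈ U \ A.map (Function.Embedding.subtype fun v => v ∈ s) := by
        intro u hu
        simp only [Finset.mem_sdiff, Finset.mem_map, Function.Embedding.subtype_apply, hU]
        refine ⟨u.2, ?_⟩
        rintro ⟨a, ha, hau⟩
        exact Finset.mem_compl.1 hu ((Subtype.ext hau : a = u) ▸ ha)
      exact h u (aux u hu) v (aux v hv)
  ext W
  simp only [Finset.mem_image, NC, NCU, Finset.mem_filter, Finset.mem_univ, true_and,
    Finset.mem_powerset]
  constructor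
  · rintro ⟨A, hA, rfl⟩
    rw [key] at hA
    refine ⟨?_, hA⟩
    intro v hv
    obtain ⟨a, -, rfl⟩ := Finset.mem_map.1 hv
    exact (hU _).2 a.2
  · rintro ⟨hW, hA⟩
    have e : (W.subtype fun v => v ∈ s).map (Function.Embedding.subtype fun v => v ∈ s) = W :=
      Finset.subtype_map_of_mem fun v hv => (hU v).1 (hW hv)
    refine ⟨W.subtype fun v => v ∈ s, ?_, e⟩
    rw [key, e]
    exact hA

/-! ### Domination -/

lemma gamma_le {α : Type*} [Fintype α] [DecidableEq α] (H : SimpleGraph α) (W : Finset α)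
    (hW : Dominates H W Finset.univ) : gamma H ≤ W.card :=
  Nat.sInf_le ⟨W, rfl, hW⟩

lemma gamma_spec {α : Type*} [Fintype α] [DecidableEq α] (H : SimpleGraph α) :
    ∃ W : Finset α, W.card = gamma H ∧ Dominates H W Finset.univ :=
  Nat.sInf_mem (s := {k | ∃ W : Finset α, W.card = k ∧ Dominates H W Finset.univ})
    ⟨_, Finset.univ, rfl, fun a _ => Or.inl (Finset.mem_univ a)⟩

lemma gamma_le_maxIn (G : SimpleGraph V) (s : Set V) [Fintype s] [DecidableEq s]
    (U : Finset V) (hU : ∀ v, v ∈ U ↔ v ∈ s) (F : Finset V) (hF : MaxIn G U F) :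
    gamma (G.induce s) ≤ F.card := by
  classical
  have e : (F.subtype fun v => v ∈ s).map (Function.Embedding.subtype fun v => v ∈ s) = F :=
    Finset.subtype_map_of_mem fun v hv => (hU v).1 (hF.1 hv)
  rw [← e, Finset.card_map]
  refine gamma_le _ _ ?_
  rintro ⟨a, ha⟩ -
  by_cases haF : a ∈ F
  · exact Or.inl (Finset.mem_subtype.2 haF)
  · obtain ⟨w, hw, hwa⟩ := hF.2.2 a ((hU a).2 ha) haF
    exact Or.inr ⟨⟨w, (hU w).1 (hF.1 hw)⟩, Finset.mem_subtype.2 hw, hwa⟩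

lemma gamma_lt {α : Type*} [Fintype α] [DecidableEq α] (H : SimpleGraph α) (a b : α)
    (hab : H.Adj a b) : gamma H + 1 ≤ Fintype.card α := by
  have : gamma H ≤ (Finset.univ.erase a).card := by
    refine gamma_le _ _ ?_
    intro c _
    by_cases hc : c = a
    · subst hc
      exact Or.inr ⟨b, Finset.mem_erase.2 ⟨hab.ne.symm, Finset.mem_univ _⟩, hab.symm⟩
    · exact Or.inl (Finset.mem_erase.2 ⟨hc, Finset.mem_univ _⟩)
  have h2 := Finset.card_erase_add_one (Finset.mem_univ a)
  rw [Finset.card_univ] at h2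
  omega

open scoped Classical in
lemma gamma_le_sum (G : SimpleGraph V) [DecidableRel G.Adj] :
    gamma G ≤ ∑ c : G.ConnectedComponent, gamma (G.induce c.supp) := by
  choose W hW1 hW2 using fun c : G.ConnectedComponent => gamma_spec (G.induce c.supp)
  refine (gamma_le G (Finset.univ.biUnion fun c =>
    (W c).map (Function.Embedding.subtype fun v => v ∈ c.supp)) ?_).trans
    (Finset.card_biUnion_le.trans (Finset.sum_le_sum fun c _ => ?_))
  · intro a _
    rcases hW2 (G.connectedComponentMk a) ⟨a, rfl⟩ (Finset.mem_univ _) with h | ⟨w, hw, hwa⟩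
    · exact Or.inl (Finset.mem_biUnion.2 ⟨_, Finset.mem_univ _, Finset.mem_map.2 ⟨_, h, rfl⟩⟩)
    · exact Or.inr ⟨w, Finset.mem_biUnion.2 ⟨_, Finset.mem_univ _, Finset.mem_map.2 ⟨_, hw, rfl⟩⟩,
        hwa⟩
  · rw [Finset.card_map, hW1]

lemma mem_NCU (G : SimpleGraph V) (U W : Finset V) :
    W ∈ NCU G U ↔ W ⊆ U ∧ ¬ IndepSet G (U \ W) := by
  simp [NCU]

lemma mem_XC (U1 U2 : Finset V) (K1 K : Finset (Finset V)) (W : Finset V) :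
    W ∈ XC U1 U2 K1 K ↔ W ⊆ U1 ∪ U2 ∧ (W ∩ U1 ∈ K1 ∨ W ∩ U2 ∈ K) := by
  rw [XC, Finset.mem_filter, Finset.mem_powerset]

lemma NCU_union (G : SimpleGraph V) {U1 U2 : Finset V}
    (hno : ∀ u ∈ U1, ∀ v ∈ U2, ¬ G.Adj u v) :
    NCU G (U1 ∪ U2) = XC U1 U2 (NCU G U1) (NCU G U2) := by
  ext W
  simp only [mem_NCU, mem_XC, Finset.inter_subset_right, true_and]
  refine and_congr_right fun _ => ?_
  rw [← not_and_or, not_iff_not]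
  constructor
  · intro h
    constructor
    · intro u hu v hv
      simp only [Finset.mem_sdiff, Finset.mem_inter] at hu hv
      exact h u (by simp only [Finset.mem_sdiff, Finset.mem_union]; tauto) v
        (by simp only [Finset.mem_sdiff, Finset.mem_union]; tauto)
    · intro u hu v hv
      simp only [Finset.mem_sdiff, Finset.mem_inter] at hu hv
      exact h u (by simp only [Finset.mem_sdiff, Finset.mem_union]; tauto) v
        (by simp only [Finset.mem_sdiff, Finset.mem_union]; tauto)
  · rintro ⟨h1, h2⟩ u hu v hv
    simp only [Finset.mem_sdiff, Finset.mem_union] at hu hv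
    rcases hu with ⟨hu | hu, huW⟩ <;> rcases hv with ⟨hv | hv, hvW⟩
    · exact h1 u (by simp [hu, huW]) v (by simp [hv, hvW])
    · exact hno u hu v hv
    · exact fun hh => hno v hv u hu hh.symm
    · exact h2 u (by simp [hu, huW]) v (by simp [hv, hvW])

open scoped Classical in
lemma union_components_aux (G : SimpleGraph V) (e : G.ConnectedComponent → ℕ)
    (U : G.ConnectedComponent → Finset V)
    (hU : ∀ c v, v ∈ U c ↔ G.connectedComponentMk v = c)
    (hlt : ∀ c, 1 ≤ e c)
    (hone : ∀ c, Collapsible (e c - 1) (NCU G (U c)))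
    (hpow : ∀ c, Relation.ReflTransGen (ElemCollapse (e c)) (U c).powerset (NCU G (U c)))
    (T : Finset G.ConnectedComponent) :
    Collapsible ((∑ c ∈ T, e c) - 1)
      (NCU G (Finset.univ.filter fun v => G.connectedComponentMk v ∈ T)) := by
  have hsub : ∀ X : Finset V, ∀ A ∈ NCU G X, A ⊆ X := by
    intro X A hA
    exact ((mem_NCU G X A).1 hA).1
  induction T using Finset.induction_on with
  | empty =>
    have : NCU G (Finset.univ.filter fun v =>
        G.connectedComponentMk v ∈ (∅ : Finset G.ConnectedComponent)) = ∅ := by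
      ext W
      simp [NCU, IndepSet]
    rw [this]
    exact Relation.ReflTransGen.refl
  | insert c T hc ih =>
    rw [Finset.sum_insert hc]
    have hUu : (Finset.univ.filter fun v => G.connectedComponentMk v ∈ insert c T) =
        U c ∪ Finset.univ.filter fun v => G.connectedComponentMk v ∈ T := by
      ext v
      simp [hU]
    rw [hUu]
    rcases T.eq_empty_or_nonempty with hT | ⟨c', hc'⟩
    · subst hT
      simpa using hone c
    · have hpos : 1 ≤ ∑ c ∈ T, e c := by
        refine le_trans ?_ (Finset.single_le_sum (fun _ _ => Nat.zero_le _) hc')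
        exact hlt c'
      have hne : ∀ u ∈ U c, ∀ v ∈ Finset.univ.filter fun v => G.connectedComponentMk v ∈ T,
          G.connectedComponentMk u ≠ G.connectedComponentMk v := by
        intro u hu v hv h
        simp only [hU, Finset.mem_filter, Finset.mem_univ, true_and] at hu hv
        rw [← h, hu] at hv
        exact hc hv
      rw [NCU_union G fun u hu v hv hh =>
        hne u hu v hv (SimpleGraph.ConnectedComponent.sound hh.reachable)]
      refine XC_collapsible (Finset.disjoint_left.2 fun v hv hv' => hne v hv v hv' rfl)
        (hsub _) (hsub _) (hone c) ih (hpow c) ?_ ?_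
      · have := hlt c
        omega
      · omega

open scoped Classical in
lemma union_components (G : SimpleGraph V) [DecidableRel G.Adj] (hG : IsChordal G) (hiso : ∀ v : V, ∃ u, G.Adj v u)
    (hcomp : ∀ c : G.ConnectedComponent,
      Collapsible (Fintype.card c.supp - gamma (G.induce c.supp) - 1)
        (NC (G.induce c.supp))) (T : Finset G.ConnectedComponent) :
    Collapsible ((∑ c ∈ T, (Fintype.card c.supp - gamma (G.induce c.supp))) - 1)
      (NCU G (Finset.univ.filter fun v => G.connectedComponentMk v ∈ T)) := by
  have hlt : ∀ c : G.ConnectedComponent, gamma (G.induce c.supp) + 1 ≤ Fintype.card c.supp := by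
    intro c
    obtain ⟨v, hv⟩ := c.nonempty_supp
    obtain ⟨u, hu⟩ := hiso v
    exact gamma_lt _ ⟨v, hv⟩ ⟨u, c.mem_supp_of_adj_mem_supp hv hu⟩ hu
  let U : G.ConnectedComponent → Finset V := fun c =>
    Finset.univ.filter fun v => G.connectedComponentMk v = c
  have hU : ∀ c v, v ∈ U c ↔ v ∈ c.supp := by
    intro c v
    simp [U, SimpleGraph.ConnectedComponent.mem_supp_iff]
  have hcard : ∀ c, (U c).card = Fintype.card c.supp := by
    intro c
    rw [← Fintype.card_coe]
    exact Fintype.card_congr (Equiv.subtypeEquivRight (hU c))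
  have hone : ∀ c, Collapsible (Fintype.card c.supp - gamma (G.induce c.supp) - 1)
      (NCU G (U c)) := by
    intro c
    have h := collapsible_map (Function.Embedding.subtype fun v => v ∈ c.supp) (hcomp c)
    rwa [NC_induce G c.supp (U c) (hU c)] at h
  have hpow : ∀ c, Relation.ReflTransGen
      (ElemCollapse (Fintype.card c.supp - gamma (G.induce c.supp)))
      (U c).powerset (NCU G (U c)) := by
    intro c
    refine powerset_chain G hG _ _ fun F hF => ?_
    have := gamma_le_maxIn G c.supp (U c) (hU c) F hF
    rw [hcard]
    omega
  exact union_components_aux G (fun c => Fintype.card c.supp - gamma (G.induce c.supp)) U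
    (fun c v => by simp [U]) (fun c => Nat.le_sub_of_add_le (by rw [add_comm]; exact hlt c))
    hone hpow T

open scoped Classical in
/-- If `NC(H)` is `(|V(H)| - γ(H) - 1)`-collapsible for every connected
component `H` of a chordal graph `G` with no isolated vertices, then `NC(G)` is
`(n - γ(G) - 1)`-collapsible. -/
theorem noncover_collapsible_of_components (G : SimpleGraph V) [DecidableRel G.Adj]
    (hG : IsChordal G) (hiso : ∀ v : V, ∃ u, G.Adj v u)
    (hcomp : ∀ c : G.ConnectedComponent,
      Collapsible (Fintype.card c.supp - gamma (G.induce c.supp) - 1)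
        (NC (G.induce c.supp))) :
    Collapsible (Fintype.card V - gamma G - 1) (NC G) := by 
  have h := union_components G hG hiso hcomp Finset.univ
  have e : NCU G (Finset.univ.filter fun v =>
      G.connectedComponentMk v ∈ (Finset.univ : Finset G.ConnectedComponent)) = NC G := by
    ext W
    simp [NCU, NC, Finset.compl_eq_univ_sdiff]
  rw [e] at h
  refine chain_mono (Nat.sub_le_sub_right ?_ 1) h
  have hs := gamma_le_sum G
  have hle : ∀ c : G.ConnectedComponent, gamma (G.induce c.supp) ≤ Fintype.card c.supp :=
    fun c => gamma_le _ Finset.univ fun a _ => Or.inl (Finset.mem_univ a)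
  have hcard : ∑ c : G.ConnectedComponent, Fintype.card c.supp = Fintype.card V := by
    have hf := Finset.card_eq_sum_card_fiberwise (f := G.connectedComponentMk)
      (s := Finset.univ) (t := Finset.univ) (fun _ _ => by simp)
    rw [Finset.card_univ] at hf
    rw [hf]
    refine Finset.sum_congr rfl fun c _ => ?_
    rw [← Fintype.card_coe]
    exact Fintype.card_congr (Equiv.subtypeEquivRight fun v => by
      simp [SimpleGraph.ConnectedComponent.mem_supp_iff])
  rw [Finset.sum_tsub_distrib _ fun c _ => hle c, hcard]
  omega
end
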